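/- Let K = {Σ_{n=1}^∞ aₙ 3^{−n} : aₙ ∈ {0,2} for all n} ⊆ [0,1] be the middle-thirds Cantor set and let L = {x + iy : x, y ∈ K} ⊆ ℂ. Then every function f holomorphic on ℂ∖L, such that f and its derivative f′ extend continuously to ℂ and f has a finite limit at infinity, is constant; that is, the 1-continuous analytic capacity a_1(L) is zero. -/

import Mathlib

open Filter Set

/-- The middle-thirds Cantor set `K = {Σ_{n=1}^∞ aₙ 3^{−n} : aₙ ∈ {0,2}} ⊆ [0,1]`. -/
def middleThirdsCantor : Set ℝ :=
  {x : ℝ | ∃ a : ℕ → ℝ, (∀ n, a n = 0 ∨ a n = 2) ∧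
    HasSum (fun n => a n / 3 ^ (n + 1)) x}

/-- The product `L = K × K ⊆ ℂ` of the middle-thirds Cantor set with itself. -/
def cantorSquare : Set ℂ :=
  {z : ℂ | z.re ∈ middleThirdsCantor ∧ z.im ∈ middleThirdsCantor}

/-!
If both coordinate projections of `L` have empty interior, then the horizontal and vertical lines
missing `L` are dense. Along these lines the continuous extension `F` of `f` has directional
derivatives `G` and `i G`, where `G` extends `f'`. Since `F` and `G` are continuous, this persists
in the limit along every line, so `F` has continuous partial derivatives satisfying the
Cauchy–Riemann equations. Thus `F` is entire, and Liouville's theorem applies.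
-/

open Topology

section LineDeriv

variable {X 𝕜 V E : Type*} [TopologicalSpace X] [NontriviallyNormedField 𝕜]
  [NormedAddCommGroup V] [NormedSpace 𝕜 V] [NormedAddCommGroup E] [NormedSpace 𝕜 E]

theorem tendstoUniformlyOnFilter_of_continuousAt_uncurry {Y α : Type*} [TopologicalSpace Y]
    [UniformSpace α] {f : X → Y → α} {x : X} {y : Y} (hf : ContinuousAt ↿f (x, y)) :
    TendstoUniformlyOnFilter f (f x) (𝓝 x) (𝓝 y) := by
  rw [tendstoUniformlyOnFilter_iff_tendsto, ← nhds_prod_eq]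
  have hmove : Tendsto (fun q : X × Y ↦ f q.1 q.2) (𝓝 (x, y)) (𝓝 (f x y)) := hf
  have hfix : Tendsto (fun q : X × Y ↦ f x q.2) (𝓝 (x, y)) (𝓝 (f x y)) :=
    hmove.comp (tendsto_const_nhds.prodMk_nhds (continuous_snd.tendsto (x, y)))
  exact (hfix.prodMk hmove).mono_right (nhds_prod_eq.symm.trans_le (nhds_le_uniformity _))

theorem hasDerivAt_of_hasLineDerivAt_add_smul {F : V → E} {d : E} {p u : V} {t : 𝕜}
    (h : HasLineDerivAt 𝕜 F d (p + t • u) u) : HasDerivAt (fun r : 𝕜 ↦ F (p + r • u)) d t := by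
  have hshift : HasDerivAt (fun r : 𝕜 ↦ F (p + t • u + (r + -t) • u)) d t :=
    HasDerivAt.comp_add_const t (-t) (by rwa [add_neg_cancel])
  have hpoint (r : 𝕜) : p + t • u + (r + -t) • u = p + r • u := by module
  simpa only [hpoint] using hshift

variable [IsRCLikeNormedField 𝕜]

theorem hasDerivAt_of_mem_closure {s : Set X} {f f' : X → 𝕜 → E} {x : X} {t : 𝕜}
    (hx : x ∈ closure s) (hf : ∀ r, ContinuousAt (f · r) x) (hf' : ContinuousAt ↿f' (x, t))
    (h : ∀ y ∈ s, ∀ r, HasDerivAt (f y) (f' y r) r) : HasDerivAt (f x) (f' x t) t := by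
  have : (𝓝[s] x).NeBot := mem_closure_iff_nhdsWithin_neBot.1 hx
  have hunif : TendstoUniformlyOnFilter f' (f' x) (𝓝[s] x) (𝓝 t) :=
    (tendstoUniformlyOnFilter_of_continuousAt_uncurry hf').mono_left nhdsWithin_le_nhds
  have hderiv : ∀ᶠ q : X × 𝕜 in 𝓝[s] x ×ˢ 𝓝 t, HasDerivAt (f q.1) (f' q.1 q.2) q.2 :=
    (eventually_mem_nhdsWithin.prod_inl _).mono fun q hq ↦ h q.1 hq q.2
  exact hasDerivAt_of_tendstoUniformlyOnFilter hunif hderiv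
    (.of_forall fun r ↦ (hf r).mono_left nhdsWithin_le_nhds)

theorem hasLineDerivAt_of_dense {S : Set V} {F F' : V → E} {u : V} (hS : Dense S)
    (hline : ∀ q ∈ S, ∀ t : 𝕜, q + t • u ∈ S) (hF : Continuous F) (hF' : Continuous F')
    (h : ∀ q ∈ S, HasLineDerivAt 𝕜 F (F' q) q u) (p : V) : HasLineDerivAt 𝕜 F (F' p) p u := by
  have hderiv : HasDerivAt (fun t : 𝕜 ↦ F (p + t • u)) (F' (p + (0 : 𝕜) • u)) 0 :=
    hasDerivAt_of_mem_closure (f := fun q t ↦ F (q + t • u)) (f' := fun q t ↦ F' (q + t • u))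
      (hS p) (fun r ↦ by fun_prop) (by fun_prop)
      fun q hq t ↦ hasDerivAt_of_hasLineDerivAt_add_smul (h _ (hline q hq t))
  rwa [zero_smul, add_zero] at hderiv

theorem hasStrictFDerivAt_comp_add_smul_add_smul {F Fu Fv : V → E} {p u v : V}
    (hFu : ContinuousAt Fu p) (hFv : ContinuousAt Fv p)
    (hu : ∀ᶠ q in 𝓝 p, HasLineDerivAt 𝕜 F (Fu q) q u)
    (hv : ∀ᶠ q in 𝓝 p, HasLineDerivAt 𝕜 F (Fv q) q v) :
    HasStrictFDerivAt (fun r : 𝕜 × 𝕜 ↦ F (p + r.1 • u + r.2 • v))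
      ((ContinuousLinearMap.toSpanSingleton 𝕜 (Fu p)).coprod
        (ContinuousLinearMap.toSpanSingleton 𝕜 (Fv p))) 0 := by
  let φ (r : 𝕜 × 𝕜) : V := p + r.1 • u + r.2 • v
  have hφ0 : φ 0 = p := by simp [φ]
  have hφ : Tendsto φ (𝓝 0) (𝓝 p) := by
    have hcont : Continuous φ := by fun_prop
    simpa only [hφ0] using hcont.tendsto 0
  have hpartial_u : ∀ᶠ r : 𝕜 × 𝕜 in 𝓝 0,
      HasFDerivAt (fun x ↦ F (φ (x, r.2))) (.toSpanSingleton 𝕜 (Fu (φ r))) r.1 := by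
    filter_upwards [hφ.eventually hu] with r hr
    have hline := hasDerivAt_of_hasLineDerivAt_add_smul (p := p + r.2 • v) (t := r.1)
      (by rwa [add_right_comm])
    simpa only [φ, add_right_comm] using hline.hasFDerivAt
  have hpartial_v : ∀ᶠ r : 𝕜 × 𝕜 in 𝓝 0,
      HasFDerivAt (fun y ↦ F (φ (r.1, y))) (.toSpanSingleton 𝕜 (Fv (φ r))) r.2 :=
    (hφ.eventually hv).mono fun r hr ↦ (hasDerivAt_of_hasLineDerivAt_add_smul hr).hasFDerivAt
  have hcont {d : V → E} (hd : ContinuousAt d p) :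
      ContinuousAt (fun r ↦ ContinuousLinearMap.toSpanSingleton 𝕜 (d (φ r))) 0 := by
    have hdφ : ContinuousAt (d ∘ φ) 0 := by
      simpa only [ContinuousAt, Function.comp_apply, hφ0] using hd.tendsto.comp hφ
    exact (ContinuousLinearMap.toSpanSingletonCLE (𝕜 := 𝕜)).continuous.continuousAt.comp hdφ
  have hderiv := hasStrictFDerivAt_uncurry_coprod (𝕜 := 𝕜) (u := 0) (f := fun x y ↦ F (φ (x, y)))
    (f₁ := fun x y ↦ .toSpanSingleton 𝕜 (Fu (φ (x, y))))
    (f₂ := fun x y ↦ .toSpanSingleton 𝕜 (Fv (φ (x, y))))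
    hpartial_u hpartial_v (hcont hFu) (hcont hFv)
  simpa only [Function.HasUncurry.uncurry, id, Prod.mk.eta, hφ0] using hderiv

end LineDeriv

section ComplexPlane

open Complex

variable {E : Type*} [NormedAddCommGroup E] [NormedSpace ℂ E] {F G : ℂ → E}

theorem hasDerivAt_of_hasLineDerivAt_one_I {z : ℂ} (hG : ContinuousAt G z)
    (h_one : ∀ᶠ w in 𝓝 z, HasLineDerivAt ℝ F (G w) w 1)
    (h_I : ∀ᶠ w in 𝓝 z, HasLineDerivAt ℝ F (I • G w) w I) : HasDerivAt F (G z) z := by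
  have hreal := hasStrictFDerivAt_comp_add_smul_add_smul hG (hG.const_smul I) h_one h_I
  have hcoord : HasFDerivAt (fun w ↦ equivRealProdCLM (w - z))
      (equivRealProdCLM : ℂ →L[ℝ] ℝ × ℝ) z :=
    equivRealProdCLM.hasFDerivAt.comp z ((hasFDerivAt_id z).sub_const z)
  have hdecomp : F = (fun r : ℝ × ℝ ↦ F (z + r.1 • (1 : ℂ) + r.2 • I)) ∘
      fun w ↦ equivRealProdCLM (w - z) :=
    funext fun w ↦ congrArg F (Complex.ext (by simp) (by simp))
  rw [← map_zero equivRealProdCLM, ← sub_self z] at hreal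
  rw [hdecomp]
  have hcomplex (w : ℂ) : w • G z = w.re • G z + w.im • I • G z := by
    rw [← coe_smul, ← coe_smul, smul_smul, ← add_smul, re_add_im]
  refine hasFDerivAt_of_restrictScalars ℝ (hreal.hasFDerivAt.comp z hcoord) ?_
  ext w
  simpa using hcomplex w

theorem hasDerivAt_of_dense_re_im {s t : Set ℝ} (hs : Dense s) (ht : Dense t) (hF : Continuous F)
    (hG : Continuous G) (h : ∀ z, z.re ∈ s ∨ z.im ∈ t → HasDerivAt F (G z) z) (z : ℂ) :
    HasDerivAt F (G z) z := by
  have hlineDeriv (w u : ℂ) (hw : w.re ∈ s ∨ w.im ∈ t) : HasLineDerivAt ℝ F (u • G w) w u := by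
    simpa using ((h w hw).hasFDerivAt.restrictScalars ℝ).hasLineDerivAt u
  have h_one := hasLineDerivAt_of_dense (𝕜 := ℝ) (u := 1) (ht.preimage isOpenMap_im)
    (fun w hw r ↦ by simpa using hw) hF hG fun w hw ↦ by
      simpa only [one_smul] using hlineDeriv w 1 (.inr hw)
  have h_I := hasLineDerivAt_of_dense (𝕜 := ℝ) (u := I) (hs.preimage isOpenMap_re)
    (fun w hw r ↦ by simpa using hw) hF (hG.const_smul I) fun w hw ↦ hlineDeriv w I (.inl hw)
  exact hasDerivAt_of_hasLineDerivAt_one_I hG.continuousAt (.of_forall h_one) (.of_forall h_I)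

theorem differentiable_of_interior_re_im_image_eq_empty {L : Set ℂ}
    (hre : interior (re '' L) = ∅) (him : interior (im '' L) = ∅) (hF : Continuous F)
    (hG : Continuous G) (h : ∀ z ∈ Lᶜ, HasDerivAt F (G z) z) : Differentiable ℂ F := by
  have hderiv := hasDerivAt_of_dense_re_im (interior_eq_empty_iff_dense_compl.1 hre)
    (interior_eq_empty_iff_dense_compl.1 him) hF hG fun z hz ↦ h z fun hzL ↦
      hz.elim (· (mem_image_of_mem re hzL)) (· (mem_image_of_mem im hzL))
  exact fun z ↦ (hderiv z).differentiableAt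

theorem a1_cantorSquare_zero_general {L : Set ℂ} (hL : IsCompact L)
    (hre : interior (re '' L) = ∅) (him : interior (im '' L) = ∅) {f : ℂ → E}
    (hf : DifferentiableOn ℂ f Lᶜ) (hext : ∃ g : ℂ → E, Continuous g ∧ EqOn g f Lᶜ)
    (hext' : ∃ g : ℂ → E, Continuous g ∧ EqOn g (deriv f) Lᶜ)
    (hlim : ∃ c, Tendsto f (cocompact ℂ) (𝓝 c)) :
    ∃ c, ∀ z ∈ Lᶜ, f z = c := by
  obtain ⟨F, hF, hFf⟩ := hext
  obtain ⟨G, hG, hGf⟩ := hext'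
  obtain ⟨c, hc⟩ := hlim
  have hderiv : ∀ z ∈ Lᶜ, HasDerivAt F (G z) z := fun z hz ↦ by
    have hnhds : Lᶜ ∈ 𝓝 z := hL.isClosed.isOpen_compl.mem_nhds hz
    rw [hGf hz]
    exact (hf.differentiableAt hnhds).hasDerivAt.congr_of_eventuallyEq
      (hFf.eventuallyEq_of_mem hnhds)
  have hFc : Tendsto F (cocompact ℂ) (𝓝 c) :=
    hc.congr' (hFf.symm.eventuallyEq_of_mem hL.compl_mem_cocompact)
  have hentire := differentiable_of_interior_re_im_image_eq_empty hre him hF hG hderiv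
  exact ⟨c, fun z hz ↦ (hFf hz).symm.trans (hentire.apply_eq_of_tendsto_cocompact z hFc)⟩

end ComplexPlane

section Cantor

theorem interior_eq_empty_of_isTotallyDisconnected {α : Type*} [ConditionallyCompleteLinearOrder α]
    [TopologicalSpace α] [OrderTopology α] [DenselyOrdered α] [Nontrivial α] {s : Set α}
    (hs : IsTotallyDisconnected s) : interior s = ∅ := by
  by_contra hne
  obtain ⟨a, b, hab, hsub⟩ := isOpen_interior.exists_Ioo_subset (nonempty_iff_ne_empty.2 hne)
  exact (Ioo_infinite hab).nontrivial.not_subsingleton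
    (hs _ (hsub.trans interior_subset) isPreconnected_Ioo)

theorem isTotallyDisconnected_cantorSet : IsTotallyDisconnected cantorSet :=
  totallyDisconnectedSpace_subtype_iff.1 cantorSetHomeomorphNatToBool.symm.totallyDisconnectedSpace

theorem hasSum_div_pow_ofDigits {b : ℕ} (d : ℕ → Fin b) :
    HasSum (fun n ↦ (d n : ℝ) / (b : ℝ) ^ (n + 1)) (Real.ofDigits d) := by
  simp only [div_eq_mul_inv]
  exact Real.summable_ofDigitsTerm.hasSum

theorem middleThirdsCantor_eq_cantorSet : middleThirdsCantor = cantorSet := by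
  rw [cantorSet_eq_zero_two_ofDigits]
  ext x
  constructor
  · rintro ⟨a, ha, hsum⟩
    have hdigit (n : ℕ) : ∃ d : Fin 3, d ≠ 1 ∧ (d : ℝ) = a n := by
      rcases ha n with h | h
      · exact ⟨0, by decide, by simp [h]⟩
      · exact ⟨2, by decide, by simp [h]⟩
    choose d hd hda using hdigit
    refine ⟨d, hd, (hasSum_div_pow_ofDigits d).unique ?_⟩
    simpa only [hda, Nat.cast_ofNat] using hsum
  · rintro ⟨d, hd, rfl⟩
    have hdigit : ∀ e : Fin 3, e ≠ 1 → (e : ℕ) = 0 ∨ (e : ℕ) = 2 := by decide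
    exact ⟨_, fun n ↦ mod_cast hdigit (d n) (hd n), hasSum_div_pow_ofDigits d⟩

theorem interior_middleThirdsCantor : interior middleThirdsCantor = ∅ :=
  middleThirdsCantor_eq_cantorSet ▸
    interior_eq_empty_of_isTotallyDisconnected isTotallyDisconnected_cantorSet

theorem isCompact_cantorSquare : IsCompact cantorSquare := by
  have hK : IsCompact middleThirdsCantor := middleThirdsCantor_eq_cantorSet ▸ isCompact_cantorSet
  exact hK.reProdIm hK

end Cantor

/-- Let `K` be the middle-thirds Cantor set and `L = K × K ⊆ ℂ`. Then every function
`f` holomorphic on `ℂ \ L` such that `f` and `f'` extend continuously to `ℂ` and `f`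
has a finite limit at infinity is constant; that is, `a₁(L) = 0`. -/
theorem a1_cantorSquare_zero :
    ∀ f : ℂ → ℂ, DifferentiableOn ℂ f cantorSquareᶜ →
      (∃ g : ℂ → ℂ, Continuous g ∧ Set.EqOn g f cantorSquareᶜ) →
      (∃ g : ℂ → ℂ, Continuous g ∧ Set.EqOn g (deriv f) cantorSquareᶜ) →
      (∃ c : ℂ, Tendsto f (cocompact ℂ) (nhds c)) →
      ∃ c : ℂ, ∀ z ∈ cantorSquareᶜ, f z = c := by
  have hre : Complex.re '' cantorSquare ⊆ middleThirdsCantor := image_subset_iff.2 fun _ hz ↦ hz.1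
  have him : Complex.im '' cantorSquare ⊆ middleThirdsCantor := image_subset_iff.2 fun _ hz ↦ hz.2
  exact fun _ ↦ a1_cantorSquare_zero_general isCompact_cantorSquare
    (subset_eq_empty (interior_mono hre) interior_middleThirdsCantor)
    (subset_eq_empty (interior_mono him) interior_middleThirdsCantor)
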